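/- Let 𝒦: X → Y be a Markov operator (a randomized map) satisfying ‖𝒦(x) − 𝒦(x')‖_{TV} ≤ γ for all x, x' ∈ X. Then for any (ε, δ)-differentially private randomized mechanism ℳ, the composed mechanism 𝒦 ∘ ℳ is (ε, γδ)-differentially private. -/

import Mathlib

open MeasureTheory ProbabilityTheory

noncomputable section

/-- Total variation distance between two measures: the supremum over measurable sets of the
absolute difference of the measures. -/
noncomputable def tvDist {α : Type*} [MeasurableSpace α] (μ ν : Measure α) : ℝ :=
  ⨆ s : {s : Set α // MeasurableSet s}, |(μ s.1).toReal - (ν s.1).toReal|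

/-- A randomized mechanism `M : D → Measure R` is `(ε, δ)`-differentially private with respect to
an adjacency relation `adj` if for all adjacent inputs and all measurable output sets `S`,
`P[M d₁ ∈ S] ≤ e^ε P[M d₂ ∈ S] + δ`. -/
def IsDP {D R : Type*} [MeasurableSpace R] (adj : D → D → Prop) (M : D → Measure R)
    (ε δ : ℝ) : Prop :=
  ∀ d₁ d₂ : D, adj d₁ d₂ → ∀ S : Set R, MeasurableSet S →
    M d₁ S ≤ ENNReal.ofReal (Real.exp ε) * M d₂ S + ENNReal.ofReal δ

/-!
The hockey-stick divergence `E_α(μ, ν) = sup_S (μ S - α ν S)` is, for `α = exp ε`, the smallest `δ`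
for which `μ S ≤ exp ε * ν S + δ` for all `S`, and for `α = 1` it is bounded by the total variation
distance. So it suffices that `κ` contracts `E_α` by `c = sup_{x, x'} E_1(κ x, κ x')`. Fix an
output event `S`. The function `f x = κ x S` oscillates by at most `c`, so `f - inf f` takes values
in `[0, c]`. The constant `inf f` adds nothing to `∫ f dμ - α ∫ f dν`, since `α` dominates
the ratio of total masses. By the layer cake formula `f - inf f` is an integral over `t ∈ (0, c]` of
indicators of superlevel sets, each of which contributes at most `E_α(μ, ν)`.
-/

open scoped ENNReal NNReal

/-- The hockey-stick divergence `E_α(μ, ν)`, which expresses differential privacy with `α = exp ε`.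
It is defined as a supremum over measurable sets with truncated differences, so that it makes sense
for arbitrary measures. -/
def hockeyStickDiv {Ω : Type*} [MeasurableSpace Ω] (α : ℝ≥0∞) (μ ν : Measure Ω) : ℝ≥0∞ :=
  ⨆ (S : Set Ω) (_ : MeasurableSet S), μ S - α * ν S

section HockeyStick

variable {Ω : Type*} [MeasurableSpace Ω] {μ ν : Measure Ω} {α : ℝ≥0∞}

lemma hockeyStickDiv_le_iff {δ : ℝ≥0∞} :
    hockeyStickDiv α μ ν ≤ δ ↔ ∀ S, MeasurableSet S → μ S ≤ α * ν S + δ := by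
  simp only [hockeyStickDiv, iSup_le_iff, tsub_le_iff_left]

lemma measure_le_mul_add_hockeyStickDiv {S : Set Ω} (hS : MeasurableSet S) :
    μ S ≤ α * ν S + hockeyStickDiv α μ ν :=
  hockeyStickDiv_le_iff.1 le_rfl S hS

lemma isDP_iff_hockeyStickDiv_le {D : Type*} {adj : D → D → Prop} {M : D → Measure Ω} {ε δ : ℝ} :
    IsDP adj M ε δ ↔ ∀ d₁ d₂, adj d₁ d₂ →
      hockeyStickDiv (ENNReal.ofReal (Real.exp ε)) (M d₁) (M d₂) ≤ ENNReal.ofReal δ := by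
  simp only [IsDP, hockeyStickDiv_le_iff]

lemma abs_measureReal_sub_le_tvDist [IsFiniteMeasure μ] [IsFiniteMeasure ν] {S : Set Ω}
    (hS : MeasurableSet S) : |μ.real S - ν.real S| ≤ tvDist μ ν := by
  have hbdd : BddAbove (Set.range fun s : {s : Set Ω // MeasurableSet s} ↦
      |μ.real s.1 - ν.real s.1|) := by
    refine ⟨max (μ.real Set.univ) (ν.real Set.univ), ?_⟩
    rintro _ ⟨s, rfl⟩
    exact abs_sub_le_of_nonneg_of_le
      measureReal_nonneg ((measureReal_mono s.1.subset_univ).trans (le_max_left _ _))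
      measureReal_nonneg ((measureReal_mono s.1.subset_univ).trans (le_max_right _ _))
  exact le_ciSup hbdd ⟨S, hS⟩

lemma hockeyStickDiv_one_le_tvDist [IsFiniteMeasure μ] [IsFiniteMeasure ν] :
    hockeyStickDiv 1 μ ν ≤ ENNReal.ofReal (tvDist μ ν) := by
  refine hockeyStickDiv_le_iff.2 fun S hS ↦ ?_
  calc μ S = ENNReal.ofReal (μ.real S) := (ofReal_measureReal).symm
    _ ≤ ENNReal.ofReal (ν.real S + tvDist μ ν) := ENNReal.ofReal_le_ofReal <|
        sub_le_iff_le_add'.1 <| (le_abs_self _).trans (abs_measureReal_sub_le_tvDist hS)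
    _ ≤ ENNReal.ofReal (ν.real S) + ENNReal.ofReal (tvDist μ ν) := ENNReal.ofReal_add_le
    _ = 1 * ν S + ENNReal.ofReal (tvDist μ ν) := by rw [ofReal_measureReal, one_mul]

lemma lintegral_eq_setLIntegral_Ioc_meas_lt (μ : Measure Ω) {f : Ω → ℝ≥0∞} (hf : Measurable f)
    {c : ℝ≥0} (hfc : ∀ x, f x ≤ c) :
    ∫⁻ x, f x ∂μ = ∫⁻ t in Set.Ioc 0 (c : ℝ), μ {x | t < (f x).toReal} := by
  have hf_top (x : Ω) : f x ≠ ∞ := ne_top_of_le_ne_top ENNReal.coe_ne_top (hfc x)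
  have hzero : ∫⁻ t in Set.Ioi (c : ℝ), μ {x | t < (f x).toReal} = 0 := by
    refine setLIntegral_eq_zero measurableSet_Ioi fun t ht ↦ ?_
    have hempty : {x | t < (f x).toReal} = ∅ := Set.eq_empty_of_forall_notMem fun x hx ↦
      (ht.trans hx).not_ge (ENNReal.toReal_le_coe_of_le_coe (hfc x))
    simp only [hempty, measure_empty, Pi.zero_apply]
  calc ∫⁻ x, f x ∂μ = ∫⁻ x, ENNReal.ofReal (f x).toReal ∂μ := by
        simp only [ENNReal.ofReal_toReal (hf_top _)]
    _ = ∫⁻ t in Set.Ioi (0 : ℝ), μ {x | t < (f x).toReal} :=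
        lintegral_eq_lintegral_meas_lt μ (.of_forall fun _ ↦ ENNReal.toReal_nonneg)
          hf.ennreal_toReal.aemeasurable
    _ = ∫⁻ t in Set.Ioc 0 (c : ℝ), μ {x | t < (f x).toReal} := by
        rw [← Set.Ioc_union_Ioi_eq_Ioi c.coe_nonneg,
          lintegral_union measurableSet_Ioi Set.Ioc_disjoint_Ioi_same, hzero, add_zero]

lemma lintegral_le_mul_lintegral_add_mul_hockeyStickDiv {f : Ω → ℝ≥0∞} (hf : Measurable f)
    {c : ℝ≥0} (hfc : ∀ x, f x ≤ c) :
    ∫⁻ x, f x ∂μ ≤ α * ∫⁻ x, f x ∂ν + c * hockeyStickDiv α μ ν := by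
  rw [lintegral_eq_setLIntegral_Ioc_meas_lt μ hf hfc,
    lintegral_eq_setLIntegral_Ioc_meas_lt ν hf hfc]
  have hmeas : Measurable fun t : ℝ ↦ ν {x | t < (f x).toReal} :=
    Antitone.measurable fun _ _ hst ↦ measure_mono fun _ hx ↦ hst.trans_lt hx
  calc ∫⁻ t in Set.Ioc 0 (c : ℝ), μ {x | t < (f x).toReal}
      ≤ ∫⁻ t in Set.Ioc 0 (c : ℝ), (α * ν {x | t < (f x).toReal} + hockeyStickDiv α μ ν) :=
        lintegral_mono fun _ ↦ measure_le_mul_add_hockeyStickDiv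
          (measurableSet_lt measurable_const hf.ennreal_toReal)
    _ = α * (∫⁻ t in Set.Ioc 0 (c : ℝ), ν {x | t < (f x).toReal}) + c * hockeyStickDiv α μ ν := by
        rw [lintegral_add_right _ measurable_const, lintegral_const_mul _ hmeas, setLIntegral_const,
          Real.volume_Ioc, sub_zero, ENNReal.ofReal_coe_nnreal, mul_comm (c : ℝ≥0∞)]

lemma lintegral_eq_iInf_mul_add_lintegral_tsub (μ : Measure Ω) (f : Ω → ℝ≥0∞) :
    ∫⁻ x, f x ∂μ = (⨅ y, f y) * μ Set.univ + ∫⁻ x, (f x - ⨅ y, f y) ∂μ := by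
  rw [← lintegral_const, ← lintegral_add_left measurable_const]
  exact lintegral_congr fun x ↦ (add_tsub_cancel_of_le (iInf_le f x)).symm

lemma lintegral_le_mul_lintegral_add_mul_hockeyStickDiv_of_le_add
    (hμν : μ Set.univ ≤ α * ν Set.univ) {f : Ω → ℝ≥0∞} (hf : Measurable f)
    {c : ℝ≥0} (hfc : ∀ x y, f x ≤ f y + c) :
    ∫⁻ x, f x ∂μ ≤ α * ∫⁻ x, f x ∂ν + c * hockeyStickDiv α μ ν := by
  set m := ⨅ y, f y with hm
  have hosc (x : Ω) : f x - m ≤ c := by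
    rw [tsub_le_iff_right, hm, add_comm, ENNReal.iInf_add]
    exact le_iInf (hfc x)
  calc ∫⁻ x, f x ∂μ = m * μ Set.univ + ∫⁻ x, (f x - m) ∂μ :=
        lintegral_eq_iInf_mul_add_lintegral_tsub μ f
    _ ≤ m * (α * ν Set.univ) + (α * ∫⁻ x, (f x - m) ∂ν + c * hockeyStickDiv α μ ν) := by
        gcongr
        exact lintegral_le_mul_lintegral_add_mul_hockeyStickDiv (hf.sub_const m) hosc
    _ = α * (m * ν Set.univ + ∫⁻ x, (f x - m) ∂ν) + c * hockeyStickDiv α μ ν := by ring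
    _ = α * ∫⁻ x, f x ∂ν + c * hockeyStickDiv α μ ν := by
        rw [hm, ← lintegral_eq_iInf_mul_add_lintegral_tsub ν f]

theorem hockeyStickDiv_bind_le {Y : Type*} [MeasurableSpace Y] (hμν : μ Set.univ ≤ α * ν Set.univ)
    {κ : Kernel Ω Y} {c : ℝ≥0} (hκ : ∀ x x', hockeyStickDiv 1 (κ x) (κ x') ≤ c) :
    hockeyStickDiv α (μ.bind κ) (ν.bind κ) ≤ c * hockeyStickDiv α μ ν := by
  refine hockeyStickDiv_le_iff.2 fun S hS ↦ ?_
  simp only [Measure.bind_apply hS κ.aemeasurable]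
  refine lintegral_le_mul_lintegral_add_mul_hockeyStickDiv_of_le_add hμν
    (κ.measurable_coe hS) fun x x' ↦ ?_
  simpa only [one_mul] using hockeyStickDiv_le_iff.1 (hκ x x') S hS

end HockeyStick

/-- Privacy amplification by a Markov operator (Balle et al.): if `K` is a Markov operator with
`‖K x − K x'‖_TV ≤ γ` for all `x, x'`, then for any `(ε, δ)`-DP randomized mechanism `M`,
the composition `K ∘ M` is `(ε, γδ)`-DP. -/
theorem dp_privacy_amplification_markov
    {D R Y : Type*} [MeasurableSpace D] [MeasurableSpace R] [MeasurableSpace Y]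
    (adj : D → D → Prop) (M : D → Measure R) (hMprob : ∀ d, IsProbabilityMeasure (M d))
    (K : Kernel R Y) [IsMarkovKernel K]
    (ε δ γ : ℝ) (hε : 0 ≤ ε) (hδ : 0 ≤ δ) (hγ : 0 ≤ γ)
    (hK : ∀ x x' : R, tvDist (K x) (K x') ≤ γ)
    (hM : IsDP adj M ε δ) :
    IsDP adj (fun d => (M d).bind (fun x => K x)) ε (γ * δ) := by
  rw [isDP_iff_hockeyStickDiv_le] at hM ⊢
  intro d₁ d₂ hd
  have hmass : M d₁ Set.univ ≤ ENNReal.ofReal (Real.exp ε) * M d₂ Set.univ := by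
    simpa only [measure_univ, mul_one, ENNReal.one_le_ofReal] using Real.one_le_exp hε
  have hK' (x x' : R) : hockeyStickDiv 1 (K x) (K x') ≤ γ.toNNReal :=
    hockeyStickDiv_one_le_tvDist.trans (ENNReal.ofReal_le_ofReal (hK x x'))
  calc hockeyStickDiv (ENNReal.ofReal (Real.exp ε)) ((M d₁).bind K) ((M d₂).bind K)
      ≤ ENNReal.ofReal γ * hockeyStickDiv (ENNReal.ofReal (Real.exp ε)) (M d₁) (M d₂) :=
        hockeyStickDiv_bind_le hmass hK'
    _ ≤ ENNReal.ofReal γ * ENNReal.ofReal δ := by gcongr; exact hM d₁ d₂ hd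
    _ = ENNReal.ofReal (γ * δ) := (ENNReal.ofReal_mul hγ).symm

end
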